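/- Reduction of p-norm minimization with a rank-deficient matrix to the full-column-rank case: Let p ≥ 2, A ∈ ℝ^{n×d} with n ≥ d, b ∈ ℝ^d, and σ > 0 be such that there exists y ∈ ℝⁿ with Aᵀy = b and σ·‖y‖₂ ≤ ‖b‖₂ (for instance, σ the smallest nonzero singular value of A and y the minimum-Euclidean-norm solution of Aᵀy = b). Let 0 < ε₁ < 1, set ε₂ := ε₁·σ/(2·d^{(p−2)/(2p)}), and let Ā ∈ ℝ^{(n+d)×d} be the matrix obtained by stacking A on top of ε₂·I_d. Let 0 < ε₃ < 1, let x* attain the minimum of ‖x‖_p^p over {x ∈ ℝⁿ : Aᵀx = b}, and let x̂ ∈ ℝ^{n+d} satisfy ‖x̂‖_p^p ≤ (1 + ε₃)·inf{‖x‖_p^p : Āᵀx = b} and ‖Āᵀ x̂ − b‖₂ ≤ ε₃. Let x̃ ∈ ℝⁿ be the vector of the first n entries of x̂. Then ‖Aᵀ x̃ − b‖₂ ≤ ε₃ + ε₁·‖b‖₂ and ‖x̃‖_p^p ≤ (1 + ε₃)·‖x*‖_p^p. -/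

import Mathlib

/-!
Write `xhat = (xt, z)`, so that `Abarᵀ xhat = Aᵀ xt + ε₂ z`. The vector `(xstar, 0)` is feasible for
the augmented problem, hence `‖xt‖_p^p + ‖z‖_p^p = ‖xhat‖_p^p ≤ (1 + ε₃) ‖xstar‖_p^p`, which gives the
bound on the value. For the residual, `‖Aᵀ xt - b‖₂ ≤ ‖Abarᵀ xhat - b‖₂ + ε₂ ‖z‖₂`, and comparing
norms for `p ≥ 2` (power mean inequality for `z`, monotonicity of `ℓ_p` norms for `y`),
`‖z‖₂ ≤ d^{1/2 - 1/p} ‖z‖_p ≤ d^{1/2 - 1/p} (2 ‖y‖_p^p)^{1/p} ≤ 2 d^{1/2 - 1/p} ‖y‖₂`,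
which with `σ ‖y‖₂ ≤ ‖b‖₂` yields `ε₂ ‖z‖₂ ≤ ε₁ ‖b‖₂`.
-/

open Matrix

/-- Euclidean norm of a real vector. -/
noncomputable def vecNorm2 {ι : Type*} [Fintype ι] (v : ι → ℝ) : ℝ :=
  Real.sqrt (∑ i, (v i) ^ 2)

/-- The `p`-th power of the `p`-norm of a vector: `‖v‖_p^p = Σᵢ |vᵢ|^p`. -/
noncomputable def pnormP {ι : Type*} [Fintype ι] (p : ℝ) (v : ι → ℝ) : ℝ :=
  ∑ i, |v i| ^ p

lemma vecNorm2_nonneg {ι : Type*} [Fintype ι] (v : ι → ℝ) : 0 ≤ vecNorm2 v :=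
  Real.sqrt_nonneg _

lemma vecNorm2_sq {ι : Type*} [Fintype ι] (v : ι → ℝ) : vecNorm2 v ^ 2 = ∑ i, (v i) ^ 2 :=
  Real.sq_sqrt (Finset.sum_nonneg fun _ _ => sq_nonneg _)

lemma vecNorm2_eq_norm {ι : Type*} [Fintype ι] (v : ι → ℝ) :
    vecNorm2 v = ‖WithLp.toLp 2 v‖ := by
  simp [vecNorm2, EuclideanSpace.norm_eq]

lemma vecNorm2_sub_smul_le {ι : Type*} [Fintype ι] (u v : ι → ℝ) {c : ℝ} (hc : 0 ≤ c) :
    vecNorm2 (u - c • v) ≤ vecNorm2 u + c * vecNorm2 v := by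
  simp only [vecNorm2_eq_norm, WithLp.toLp_sub, WithLp.toLp_smul]
  refine (norm_sub_le _ _).trans ?_
  rw [norm_smul, Real.norm_of_nonneg hc]

lemma pnormP_nonneg {ι : Type*} [Fintype ι] (p : ℝ) (v : ι → ℝ) : 0 ≤ pnormP p v :=
  Finset.sum_nonneg fun _ _ => Real.rpow_nonneg (abs_nonneg _) _

lemma pnormP_sum {ι κ : Type*} [Fintype ι] [Fintype κ] (p : ℝ) (v : ι ⊕ κ → ℝ) :
    pnormP p v = pnormP p (fun i => v (Sum.inl i)) + pnormP p (fun i => v (Sum.inr i)) :=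
  Fintype.sum_sum_type _

/-- The `ℓ_p` norm is at most the Euclidean norm when `p ≥ 2`. -/
lemma pnormP_le_vecNorm2_rpow {ι : Type*} [Fintype ι] {p : ℝ} (hp : 2 ≤ p) (v : ι → ℝ) :
    pnormP p v ≤ vecNorm2 v ^ p := by
  have key : ∀ x : ℝ, 0 ≤ x → x ^ p = x ^ (p - 2) * x ^ 2 := fun x hx => by
    rw [← Real.rpow_natCast, ← Real.rpow_add' hx (by push_cast; linarith)]
    congr 1
    push_cast
    ring
  rw [key _ (vecNorm2_nonneg v), vecNorm2_sq, Finset.mul_sum]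
  refine Finset.sum_le_sum fun i _ => ?_
  rw [key _ (abs_nonneg _), sq_abs]
  have hi : |v i| ≤ vecNorm2 v :=
    Real.abs_le_sqrt (Finset.single_le_sum (f := fun i => v i ^ 2)
      (fun j _ => sq_nonneg _) (Finset.mem_univ i))
  gcongr

/-- The power mean inequality between the exponents `2` and `p`. -/
lemma vecNorm2_rpow_le {d : ℕ} {p : ℝ} (hp : 2 ≤ p) (v : Fin d → ℝ) :
    vecNorm2 v ^ p ≤ (d : ℝ) ^ (p / 2 - 1) * pnormP p v := by
  have h := Real.rpow_sum_le_const_mul_sum_rpow (Finset.univ : Finset (Fin d))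
    (fun i => v i ^ 2) (p := p / 2) (by linarith)
  have key : ∀ x : ℝ, 0 ≤ x → (x ^ 2) ^ (p / 2) = x ^ p := fun x hx => by
    rw [← Real.rpow_natCast, ← Real.rpow_mul hx]
    congr 1
    push_cast
    ring
  simp only [abs_pow, sq_abs, Finset.card_univ, Fintype.card_fin] at h
  rw [← vecNorm2_sq, key _ (vecNorm2_nonneg v)] at h
  refine h.trans_eq ?_
  congr 1
  refine Finset.sum_congr rfl fun i _ => ?_
  rw [← sq_abs, key _ (abs_nonneg _)]

/-- If `‖z‖_p^p ≤ 2 ‖y‖_p^p` then `‖z‖₂ ≤ 2 d^{1/2 - 1/p} ‖y‖₂`. -/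
lemma vecNorm2_le_of_pnormP_le {n d : ℕ} {p : ℝ} (hp : 2 ≤ p) (z : Fin d → ℝ) (y : Fin n → ℝ)
    (h : pnormP p z ≤ 2 * pnormP p y) :
    vecNorm2 z ≤ 2 * (d : ℝ) ^ ((p - 2) / (2 * p)) * vecNorm2 y := by
  have hp0 : 0 < p := by linarith
  have hN := vecNorm2_nonneg y
  have hD : (0 : ℝ) ≤ (d : ℝ) ^ ((p - 2) / (2 * p)) := by positivity
  rw [← Real.rpow_le_rpow_iff (vecNorm2_nonneg z) (by positivity) hp0,
    Real.mul_rpow (by positivity) hN, Real.mul_rpow (by norm_num) hD,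
    ← Real.rpow_mul (Nat.cast_nonneg d)]
  have he : (p - 2) / (2 * p) * p = p / 2 - 1 := by field_simp
  have h2 : (2 : ℝ) ≤ 2 ^ p := by
    simpa using Real.rpow_le_rpow_of_exponent_le (x := 2) (by norm_num) (show (1 : ℝ) ≤ p by linarith)
  rw [he]
  calc vecNorm2 z ^ p ≤ (d : ℝ) ^ (p / 2 - 1) * pnormP p z := vecNorm2_rpow_le hp z
    _ ≤ (d : ℝ) ^ (p / 2 - 1) * (2 ^ p * vecNorm2 y ^ p) := by
        gcongr
        refine h.trans ?_
        have := pnormP_nonneg p y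
        gcongr
        exact pnormP_le_vecNorm2_rpow hp y
    _ = 2 ^ p * (d : ℝ) ^ (p / 2 - 1) * vecNorm2 y ^ p := by ring

/-- Reduction of `p`-norm minimization with a rank-deficient matrix to the
full-column-rank case. -/
theorem low_rank_reduction
    {n d : ℕ} (hnd : d ≤ n)
    (p : ℝ) (hp : 2 ≤ p)
    (A : Matrix (Fin n) (Fin d) ℝ) (b : Fin d → ℝ)
    (σ : ℝ) (hσ : 0 < σ)
    (hy : ∃ y : Fin n → ℝ, Aᵀ *ᵥ y = b ∧ σ * vecNorm2 y ≤ vecNorm2 b)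
    (ε₁ ε₂ ε₃ : ℝ)
    (hε₁0 : 0 < ε₁) (hε₁1 : ε₁ < 1) (hε₃0 : 0 < ε₃) (hε₃1 : ε₃ < 1)
    (hε₂ : ε₂ = ε₁ * σ / (2 * (d : ℝ) ^ ((p - 2) / (2 * p))))
    (Abar : Matrix (Fin n ⊕ Fin d) (Fin d) ℝ)
    (hAbar : Abar = Matrix.fromRows A (ε₂ • (1 : Matrix (Fin d) (Fin d) ℝ)))
    (xstar : Fin n → ℝ)
    (hxs_feas : Aᵀ *ᵥ xstar = b)
    (hxs_min : ∀ x : Fin n → ℝ, Aᵀ *ᵥ x = b → pnormP p xstar ≤ pnormP p x)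
    (xhat : Fin n ⊕ Fin d → ℝ)
    (hxhat_val : pnormP p xhat ≤
      (1 + ε₃) * sInf ((fun x : Fin n ⊕ Fin d → ℝ => pnormP p x) ''
        {x | Abarᵀ *ᵥ x = b}))
    (hxhat_feas : vecNorm2 (Abarᵀ *ᵥ xhat - b) ≤ ε₃)
    (xt : Fin n → ℝ) (hxt : xt = fun i => xhat (Sum.inl i)) :
    vecNorm2 (Aᵀ *ᵥ xt - b) ≤ ε₃ + ε₁ * vecNorm2 b ∧
    pnormP p xt ≤ (1 + ε₃) * pnormP p xstar := by
  obtain ⟨y, hyb, hyσ⟩ := hy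
  have hmul : ∀ x : Fin n ⊕ Fin d → ℝ, Abarᵀ *ᵥ x =
      Aᵀ *ᵥ (fun i => x (Sum.inl i)) + ε₂ • (fun i => x (Sum.inr i)) := fun x => by
    rw [hAbar, Matrix.transpose_fromRows, Matrix.fromCols_mulVec, Matrix.transpose_smul,
      Matrix.transpose_one, Matrix.smul_mulVec, Matrix.one_mulVec]
    rfl
  have hinf : sInf ((fun x : Fin n ⊕ Fin d → ℝ => pnormP p x) '' {x | Abarᵀ *ᵥ x = b})
      ≤ pnormP p xstar := by
    refine csInf_le ⟨0, ?_⟩ ⟨Sum.elim xstar 0, ?_, ?_⟩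
    · rintro _ ⟨x, -, rfl⟩
      exact pnormP_nonneg p x
    · have h0 : (fun i => (0 : Fin d → ℝ) i) = 0 := rfl
      simp only [Set.mem_ofPred_eq, hmul, Sum.elim_inl, Sum.elim_inr, h0, smul_zero, add_zero]
      exact hxs_feas
    · have hp0 : p ≠ 0 := by linarith
      simp [pnormP, Real.zero_rpow hp0]
  have hval : pnormP p xhat ≤ (1 + ε₃) * pnormP p xstar := hxhat_val.trans (by gcongr)
  have hsplit := pnormP_sum p xhat
  rw [← hxt] at hsplit
  set z : Fin d → ℝ := fun i => xhat (Sum.inr i) with hz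
  have hz0 := pnormP_nonneg p z
  have ht0 := pnormP_nonneg p xt
  refine ⟨?_, by linarith⟩
  have hs0 := pnormP_nonneg p xstar
  have hzy : pnormP p z ≤ 2 * pnormP p y := by
    have := hxs_min y hyb
    nlinarith
  have hz2 := vecNorm2_le_of_pnormP_le hp z y hzy
  have hε₂0 : 0 ≤ ε₂ := by rw [hε₂]; positivity
  have hres : Aᵀ *ᵥ xt - b = (Abarᵀ *ᵥ xhat - b) - ε₂ • z := by
    rw [hmul, ← hxt, ← hz]
    abel
  have hb0 := vecNorm2_nonneg b
  have hεz : ε₂ * vecNorm2 z ≤ ε₁ * vecNorm2 b := by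
    -- For `d = 0` the factor `d ^ ((p - 2) / (2 * p))` may vanish, and then `ε₂ = 0`.
    rcases eq_or_ne ((d : ℝ) ^ ((p - 2) / (2 * p))) 0 with hD | hD
    · rw [hε₂, hD]
      simp only [mul_zero, div_zero, zero_mul]
      positivity
    · calc ε₂ * vecNorm2 z ≤ ε₂ * (2 * (d : ℝ) ^ ((p - 2) / (2 * p)) * vecNorm2 y) := by gcongr
        _ = ε₁ * (σ * vecNorm2 y) := by
            rw [hε₂, ← mul_assoc, div_mul_cancel₀ _ (mul_ne_zero two_ne_zero hD), mul_assoc]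
        _ ≤ ε₁ * vecNorm2 b := by gcongr
  rw [hres]
  exact (vecNorm2_sub_smul_le _ _ hε₂0).trans (add_le_add hxhat_feas hεz)
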